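/- (Lemma 5.7 (i)) Let u : Θ → ℝ be bounded, n ≥ 1, and λ_i a fixed partition-jump datum. Then the function u^{n,λ_i} is Hölder continuous with exponent 2/(3p+3) in the time variable on (s_i, T], uniformly in the space variable: for all s, s' ∈ (s_i, T] and all x ∈ ℝ^d, |u^{n,λ_i}(s, x) − u^{n,λ_i}(s', x)| ≤ n |s − s'|^{2/(3p+3)}. -/

import Mathlib

open MeasureTheory Set Filter Topology

noncomputable section

/-- `ℝ^d` with the Euclidean norm. -/
abbrev E (d : ℕ) := EuclideanSpace ℝ (Fin d)

/-- A point `θ = (t, ω)` of `Θ = [0,T] × Ω`, where `Ω` is the set of continuous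
paths `[0,T] → ℝ^d` starting from the origin. -/
structure Theta (T : ℝ) (d : ℕ) where
  t : ℝ
  path : ℝ → E d
  ht : t ∈ Set.Icc 0 T
  cont : ContinuousOn path (Set.Icc 0 T)
  init : path 0 = 0

/-- `‖f‖_q^q := ‖f T‖^q + ∫_0^T ‖f s‖^q ds`. -/
def pnormPow (T q : ℝ) {d : ℕ} (f : ℝ → E d) : ℝ :=
  ‖f T‖ ^ q + ∫ s in (0:ℝ)..T, ‖f s‖ ^ q

/-- `‖f‖_q := (‖f T‖^q + ∫_0^T ‖f s‖^q ds)^(1/q)`. -/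
def pnorm (T q : ℝ) {d : ℕ} (f : ℝ → E d) : ℝ := (pnormPow T q f) ^ (1 / q)

/-- The pseudo-distance `d_p(θ,θ') = |t - t'| + ‖ω_{t∧·} - ω'_{t'∧·}‖_p`. -/
def dpDist (T p : ℝ) {d : ℕ} (θ θ' : Theta T d) : ℝ :=
  |θ.t - θ'.t| + pnorm T p (fun s => θ.path (min θ.t s) - θ'.path (min θ'.t s))

/-- The set `𝓛_{t,s}` of monotone time changes: for `s > 0`, nondecreasing
`ℓ : [0,T] → ℝ` restricting to an increasing bijection from `[0,t]` onto `[0,s]`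
with `ℓ(r) = r - t + s` on `(t,T]`; for `s = 0` the single function `ℓ^{t,0}`. -/
def LL (T t s : ℝ) : Set (ℝ → ℝ) :=
  if s = 0 then {fun r => if r ≤ t then 0 else r - t}
  else {ℓ | MonotoneOn ℓ (Set.Icc 0 T) ∧ StrictMonoOn ℓ (Set.Icc 0 t) ∧
        Set.BijOn ℓ (Set.Icc 0 t) (Set.Icc 0 s) ∧ ∀ r ∈ Set.Ioc t T, ℓ r = r - t + s}

/-- `‖ℓ - I‖_∞ := sup_{0 ≤ r ≤ T} |ℓ(r) - r|`. -/
def supId (T : ℝ) (ℓ : ℝ → ℝ) : ℝ := ⨆ r : Set.Icc (0:ℝ) T, |ℓ r - (r : ℝ)|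

/-- The penalization `Φ(s,η,θ,ℓ) := ‖ℓ - I‖_∞^{2/(3p+3)} + ‖η_{s∧ℓ(·)} - ω_{t∧·}‖_{p+1}^{p+1}`. -/
def Phi (T p : ℝ) {d : ℕ} (s : ℝ) (η : ℝ → E d) (θ : Theta T d) (ℓ : ℝ → ℝ) : ℝ :=
  (supId T ℓ) ^ (2 / (3 * p + 3)) +
    pnormPow T (p + 1) (fun r => η (min s (ℓ r)) - θ.path (min θ.t r))

/-- The regularization
`u^n(s,η) := sup { u(θ) - n Φ(s,η,θ,ℓ) : θ ∈ Θ \ {𝟎}, ℓ ∈ 𝓛_{t,s} }`. -/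
def reg (T p : ℝ) {d : ℕ} (u : Theta T d → ℝ) (n : ℕ) (s : ℝ) (η : ℝ → E d) : ℝ :=
  sSup { x | ∃ θ : Theta T d, ∃ ℓ : ℝ → ℝ, (θ.t, θ.path) ≠ (0, 0) ∧ ℓ ∈ LL T θ.t s ∧
        x = u θ - (n : ℝ) * Phi T p s η θ ℓ }

/-- A càdlàg path on `[0,T]`: right-continuous with left limits. -/
def Cadlag (T : ℝ) {d : ℕ} (η : ℝ → E d) : Prop :=
  (∀ x ∈ Set.Ico (0:ℝ) T, ContinuousWithinAt η (Set.Ici x) x) ∧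
  (∀ x ∈ Set.Ioc (0:ℝ) T, ∃ l : E d, Filter.Tendsto η (nhdsWithin x (Set.Iio x)) (𝓝 l))

/-- The piecewise constant path `η^{λ_i}(x)_s = Σ_j x_j 1_{{s ≥ s_j}}`. -/
def pcPath {d i : ℕ} (sVec : Fin i → ℝ) (xVec : Fin i → E d) : ℝ → E d :=
  fun r => ∑ j : Fin i, if sVec j ≤ r then xVec j else 0

/-! A piecewise affine increasing `φ : ℝ → ℝ` that fixes `(-∞, a]`, maps `[a, s]` onto `[a, s']`
and is a translation on `[s, ∞)` moves no point by more than `|s - s'|`. Hence `ℓ ↦ φ ∘ ℓ` maps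
`𝓛_{t,s}` into `𝓛_{t,s'}` and increases `‖ℓ - I‖_∞` by at most `|s - s'|`. If the path `η` is
constant after time `a`, then `η_{s' ∧ φ(ℓ(·))} = η_{s ∧ ℓ(·)}`, so only the first term of `Φ`
changes, and by subadditivity of `x ↦ x ^ α` for `α ∈ [0, 1]` it grows by at most `|s - s'| ^ α`.
Taking suprema gives the Hölder bound for `u^n`. -/

lemma bijOn_Icc_of_strictMono {α β : Type*} [ConditionallyCompleteLinearOrder α]
    [TopologicalSpace α] [OrderTopology α] [DenselyOrdered α] [LinearOrder β] [TopologicalSpace β]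
    [OrderClosedTopology β] {f : α → β} (hf : StrictMono f) (hcont : Continuous f) {x y : α}
    (hxy : x ≤ y) : BijOn f (Icc x y) (Icc (f x) (f y)) :=
  ⟨hf.monotone.mapsTo_Icc, hf.injective.injOn, intermediate_value_Icc hxy hcont.continuousOn⟩

/-- The continuous function that is `0` before `a`, `1` after `s`, and affine on `[a, s]`
(for `a < s`). -/
def ramp (a s y : ℝ) : ℝ := max 0 (min 1 ((y - a) / (s - a)))

/-- The time change `φ` of the line that fixes `(-∞, a]`, stretches `[a, s]` affinely onto `[a, s']`
and is a translation on `[s, ∞)` (for `a < s`). Writing it as a perturbation of the identity makes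
the bound on its displacement immediate. -/
def retime (a s s' y : ℝ) : ℝ := y + (s' - s) * ramp a s y

section Retime

variable {a s s' x y : ℝ}

lemma ramp_nonneg : 0 ≤ ramp a s y := le_max_left _ _

lemma ramp_le_one : ramp a s y ≤ 1 := max_le zero_le_one (min_le_left _ _)

lemma continuous_ramp : Continuous (ramp a s) := by
  unfold ramp
  fun_prop

lemma ramp_of_le_left (has : a ≤ s) (hy : y ≤ a) : ramp a s y = 0 :=
  max_eq_left ((min_le_right _ _).trans
    (div_nonpos_of_nonpos_of_nonneg (sub_nonpos.2 hy) (sub_nonneg.2 has)))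

lemma ramp_of_right_le (has : a < s) (hy : s ≤ y) : ramp a s y = 1 := by
  have one_le : 1 ≤ (y - a) / (s - a) := (one_le_div (sub_pos.2 has)).2 (by linarith)
  rw [ramp, min_eq_left one_le, max_eq_right zero_le_one]

lemma monotone_ramp (has : a ≤ s) : Monotone (ramp a s) := fun x y hxy => by
  have := sub_nonneg.2 has
  unfold ramp
  gcongr

lemma ramp_sub_ramp_le (has : a < s) (hxy : x ≤ y) :
    (s - a) * (ramp a s y - ramp a s x) ≤ y - x := by
  have pos : 0 < s - a := sub_pos.2 has
  have split : (y - a) / (s - a) = (x - a) / (s - a) + (y - x) / (s - a) := by ring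
  have nonneg : 0 ≤ (y - x) / (s - a) := div_nonneg (sub_nonneg.2 hxy) pos.le
  rw [mul_comm, ← le_div_iff₀ pos, ramp, ramp, split]
  grind

lemma abs_retime_sub_le : |retime a s s' y - y| ≤ |s - s'| := by
  rw [retime, add_sub_cancel_left, abs_mul, abs_of_nonneg ramp_nonneg, abs_sub_comm s s']
  exact mul_le_of_le_one_right (abs_nonneg _) ramp_le_one

lemma continuous_retime : Continuous (retime a s s') :=
  continuous_id.add (continuous_const.mul continuous_ramp)

lemma retime_of_le (has : a ≤ s) (hy : y ≤ a) : retime a s s' y = y := by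
  rw [retime, ramp_of_le_left has hy, mul_zero, add_zero]

lemma retime_of_ge (has : a < s) (hy : s ≤ y) : retime a s s' y = y - s + s' := by
  rw [retime, ramp_of_right_le has hy]
  ring

lemma retime_right (has : a < s) : retime a s s' s = s' := by
  rw [retime_of_ge has le_rfl, sub_self, zero_add]

-- For `s' < s` the ramp has slope at most `1 / (s - a)`, while `s - s' < s - a`.
lemma strictMono_retime (has : a < s) (has' : a < s') : StrictMono (retime a s s') :=
  fun x y hxy => by
    have mono : ramp a s x ≤ ramp a s y := monotone_ramp has.le hxy.le
    have lipschitz := ramp_sub_ramp_le has hxy.le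
    unfold retime
    rcases mono.eq_or_lt with heq | hlt
    · rw [heq]
      gcongr
    · have : (a - s) * (ramp a s y - ramp a s x) < (s' - s) * (ramp a s y - ramp a s x) :=
        mul_lt_mul_of_pos_right (by linarith) (sub_pos.2 hlt)
      linarith

lemma bijOn_retime (ha : 0 ≤ a) (has : a < s) (has' : a < s') :
    BijOn (retime a s s') (Icc 0 s) (Icc 0 s') := by
  have bij := bijOn_Icc_of_strictMono (strictMono_retime has has') continuous_retime
    (ha.trans has.le)
  rwa [retime_of_le has.le ha, retime_right has] at bij

lemma min_retime (has : a < s) (has' : a < s') :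
    min s' (retime a s s' y) = retime a s s' (min s y) := by
  rw [(strictMono_retime has has').monotone.map_min, retime_right has]

lemma stopped_comp_retime {α : Type*} {T : ℝ} {η : ℝ → α} (hη : ∀ r ∈ Icc a T, η r = η a)
    (hs : s ∈ Ioc a T) (hs' : s' ∈ Ioc a T) :
    η (min s' (retime a s s' y)) = η (min s y) := by
  rw [min_retime hs.1 hs'.1]
  rcases le_total (min s y) a with hle | hge
  · rw [retime_of_le hs.1.le hle]
  · have mono := (strictMono_retime hs.1 hs'.1).monotone
    have left : a ≤ retime a s s' (min s y) := by
      simpa only [retime_of_le hs.1.le le_rfl] using mono hge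
    have right : retime a s s' (min s y) ≤ s' := by
      simpa only [retime_right hs.1] using mono (min_le_left s y)
    rw [hη _ ⟨left, right.trans hs'.2⟩, hη _ ⟨hge, (min_le_left s y).trans hs.2⟩]

end Retime

section TimeChange

variable {T t s : ℝ} {ℓ : ℝ → ℝ}

lemma mem_LL_iff (hs : s ≠ 0) :
    ℓ ∈ LL T t s ↔ MonotoneOn ℓ (Icc 0 T) ∧ StrictMonoOn ℓ (Icc 0 t) ∧
      BijOn ℓ (Icc 0 t) (Icc 0 s) ∧ ∀ r ∈ Ioc t T, ℓ r = r - t + s := by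
  rw [LL, if_neg hs, mem_ofPred_eq]

lemma id_mem_LL (hs : s ≠ 0) : id ∈ LL T s s :=
  (mem_LL_iff hs).2 ⟨monotone_id.monotoneOn _, strictMono_id.strictMonoOn _, bijOn_id _,
    fun r _ => (sub_add_cancel r s).symm⟩

lemma retime_comp_mem_LL {a s' : ℝ} (ha : 0 ≤ a) (has : a < s) (has' : a < s')
    (hℓ : ℓ ∈ LL T t s) : retime a s s' ∘ ℓ ∈ LL T t s' := by
  obtain ⟨mono, strict, bij, shift⟩ := (mem_LL_iff (ha.trans_lt has).ne').1 hℓ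
  have hφ := strictMono_retime has has'
  refine (mem_LL_iff (ha.trans_lt has').ne').2 ⟨hφ.monotone.comp_monotoneOn mono,
    hφ.comp_strictMonoOn strict, (bijOn_retime ha has has').comp bij, fun r hr => ?_⟩
  have hr_ge : s ≤ r - t + s := by linarith [hr.1]
  rw [Function.comp_apply, shift r hr, retime_of_ge has hr_ge, add_sub_cancel_right]

lemma supId_nonneg : 0 ≤ supId T ℓ := Real.iSup_nonneg fun _ => abs_nonneg _

lemma bddAbove_abs_sub_id_of_monotoneOn (hℓ : MonotoneOn ℓ (Icc 0 T)) :
    BddAbove (range fun r : Icc (0 : ℝ) T => |ℓ r - (r : ℝ)|) := by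
  refine ⟨max |ℓ 0 - T| |ℓ T|, ?_⟩
  rintro _ ⟨⟨r, hr⟩, rfl⟩
  have hT : 0 ≤ T := hr.1.trans hr.2
  have lower : ℓ 0 ≤ ℓ r := hℓ ⟨le_rfl, hT⟩ hr hr.1
  have upper : ℓ r ≤ ℓ T := hℓ hr ⟨hT, le_rfl⟩ hr.2
  exact abs_le_max_abs_abs (by linarith [hr.2]) (by linarith [hr.1])

lemma supId_comp_le {φ : ℝ → ℝ} {δ : ℝ} (hT : 0 ≤ T) (hℓ : MonotoneOn ℓ (Icc 0 T))
    (hφ : ∀ y, |φ y - y| ≤ δ) : supId T (φ ∘ ℓ) ≤ supId T ℓ + δ := by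
  have : Nonempty (Icc (0 : ℝ) T) := ⟨⟨0, le_rfl, hT⟩⟩
  refine ciSup_le fun r => ?_
  calc |φ (ℓ r) - r| ≤ |φ (ℓ r) - ℓ r| + |ℓ r - r| := abs_sub_le _ _ _
    _ ≤ δ + supId T ℓ := add_le_add (hφ _) (le_ciSup (bddAbove_abs_sub_id_of_monotoneOn hℓ) r)
    _ = supId T ℓ + δ := add_comm _ _

end TimeChange

section Regularization

variable {T p : ℝ} {d : ℕ} {u : Theta T d → ℝ} {n : ℕ} {a s s' : ℝ} {η : ℝ → E d}
  {θ : Theta T d} {ℓ : ℝ → ℝ}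

lemma pnormPow_nonneg {q : ℝ} {f : ℝ → E d} (hT : 0 ≤ T) : 0 ≤ pnormPow T q f :=
  add_nonneg (by positivity) (intervalIntegral.integral_nonneg hT fun _ _ => by positivity)

lemma Phi_nonneg (hT : 0 ≤ T) : 0 ≤ Phi T p s η θ ℓ :=
  add_nonneg (Real.rpow_nonneg supId_nonneg _) (pnormPow_nonneg hT)

lemma Phi_retime_comp_le (hp : -1 / 3 ≤ p) (ha : 0 ≤ a) (hη : ∀ r ∈ Icc a T, η r = η a)
    (hs : s ∈ Ioc a T) (hs' : s' ∈ Ioc a T) (hℓ : MonotoneOn ℓ (Icc 0 T)) :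
    Phi T p s' η θ (retime a s s' ∘ ℓ) ≤ Phi T p s η θ ℓ + |s - s'| ^ (2 / (3 * p + 3)) := by
  have exponent_nonneg : 0 ≤ 2 / (3 * p + 3) := div_nonneg zero_le_two (by linarith)
  have exponent_le_one : 2 / (3 * p + 3) ≤ 1 := (div_le_one (by linarith)).2 (by linarith)
  have hT : 0 ≤ T := ha.trans (hs.1.le.trans hs.2)
  have supId_le : supId T (retime a s s' ∘ ℓ) ^ (2 / (3 * p + 3)) ≤
      supId T ℓ ^ (2 / (3 * p + 3)) + |s - s'| ^ (2 / (3 * p + 3)) :=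
    (Real.rpow_le_rpow supId_nonneg (supId_comp_le hT hℓ fun _ => abs_retime_sub_le)
      exponent_nonneg).trans
      (Real.rpow_add_le_add_rpow supId_nonneg (abs_nonneg _) exponent_nonneg exponent_le_one)
  simp only [Phi, Function.comp_apply, stopped_comp_retime hη hs hs']
  linarith

/-- The set of values `u(θ) - n Φ(s, η, θ, ℓ)` whose supremum is `u^n(s, η)`. -/
def regValues (T p : ℝ) {d : ℕ} (u : Theta T d → ℝ) (n : ℕ) (s : ℝ) (η : ℝ → E d) : Set ℝ :=
  {x | ∃ θ : Theta T d, ∃ ℓ : ℝ → ℝ, (θ.t, θ.path) ≠ (0, 0) ∧ ℓ ∈ LL T θ.t s ∧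
    x = u θ - (n : ℝ) * Phi T p s η θ ℓ}

lemma reg_eq_sSup : reg T p u n s η = sSup (regValues T p u n s η) := rfl

lemma regValues_nonempty (hs : s ∈ Ioc 0 T) : (regValues T p u n s η).Nonempty := by
  let θ : Theta T d := ⟨s, 0, ⟨hs.1.le, hs.2⟩, continuousOn_const, rfl⟩
  exact ⟨_, θ, id, fun h => hs.1.ne' (congrArg Prod.fst h), id_mem_LL hs.1.ne', rfl⟩

lemma bddAbove_regValues (hT : 0 ≤ T) (hu : BddAbove (range u)) :
    BddAbove (regValues T p u n s η) := by
  obtain ⟨M, hM⟩ := hu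
  refine ⟨M, ?_⟩
  rintro _ ⟨θ, ℓ, -, -, rfl⟩
  exact (sub_le_self _ (mul_nonneg n.cast_nonneg (Phi_nonneg hT))).trans (hM ⟨θ, rfl⟩)

lemma reg_le_reg_add (hp : -1 / 3 ≤ p) (hu : BddAbove (range u)) (ha : 0 ≤ a)
    (hη : ∀ r ∈ Icc a T, η r = η a) (hs : s ∈ Ioc a T) (hs' : s' ∈ Ioc a T) :
    reg T p u n s η ≤ reg T p u n s' η + n * |s - s'| ^ (2 / (3 * p + 3)) := by
  have s_pos : 0 < s := ha.trans_lt hs.1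
  rw [reg_eq_sSup, reg_eq_sSup]
  refine csSup_le (regValues_nonempty ⟨s_pos, hs.2⟩) ?_
  rintro _ ⟨θ, ℓ, hθ, hℓ, rfl⟩
  have hPhi : Phi T p s' η θ (retime a s s' ∘ ℓ) ≤
      Phi T p s η θ ℓ + |s - s'| ^ (2 / (3 * p + 3)) :=
    Phi_retime_comp_le hp ha hη hs hs' ((mem_LL_iff s_pos.ne').1 hℓ).1
  calc u θ - n * Phi T p s η θ ℓ
      ≤ u θ - n * Phi T p s' η θ (retime a s s' ∘ ℓ) + n * |s - s'| ^ (2 / (3 * p + 3)) := by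
        linarith [mul_le_mul_of_nonneg_left hPhi (n.cast_nonneg (α := ℝ))]
    _ ≤ sSup (regValues T p u n s' η) + n * |s - s'| ^ (2 / (3 * p + 3)) := by
        gcongr
        exact le_csSup (bddAbove_regValues (s_pos.le.trans hs.2) hu)
          ⟨θ, _, hθ, retime_comp_mem_LL ha hs.1 hs'.1 hℓ, rfl⟩

end Regularization

lemma pcPath_eq_of_forall_le {d i : ℕ} {sVec : Fin i → ℝ} (xVec : Fin i → E d) {a r : ℝ}
    (ha : ∀ j, sVec j ≤ a) (hr : a ≤ r) : pcPath sVec xVec r = pcPath sVec xVec a := by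
  simp only [pcPath, ha, (ha _).trans hr]

theorem stmt8_general {T p : ℝ} {d : ℕ} (hp : -1 / 3 ≤ p) {u : Theta T d → ℝ}
    (hu : BddAbove (range u)) (n : ℕ) {a : ℝ} (ha : 0 ≤ a) {η : ℝ → E d}
    (hη : ∀ r ∈ Icc a T, η r = η a) {s s' : ℝ} (hs : s ∈ Ioc a T) (hs' : s' ∈ Ioc a T) :
    |reg T p u n s η - reg T p u n s' η| ≤ n * |s - s'| ^ (2 / (3 * p + 3)) := by
  rw [abs_sub_le_iff, sub_le_iff_le_add', sub_le_iff_le_add']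
  refine ⟨reg_le_reg_add hp hu ha hη hs hs', ?_⟩
  rw [abs_sub_comm s s']
  exact reg_le_reg_add hp hu ha hη hs' hs

/-- (Lemma 5.7 (i)) For bounded `u`, the function `u^{n,λ_i}(·,x)` is
`2/(3p+3)`-Hölder in time on `(s_i, T]`, uniformly in `x`:
`|u^{n,λ_i}(s,x) - u^{n,λ_i}(s',x)| ≤ n |s - s'|^{2/(3p+3)}`.
Here `i = m+1`, `λ_i = ((s_1,…,s_i),(x_1,…,x_{i-1}))` and the path is
`η^{λ_i}(x) = pcPath sVec (Fin.snoc xs x)`. -/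
theorem stmt8 (T : ℝ) (hT : 0 < T) (d : ℕ) (hd : 1 ≤ d) (p : ℝ) (hp : 1 ≤ p)
    (u : Theta T d → ℝ) (hub : ∃ M : ℝ, ∀ θ : Theta T d, |u θ| ≤ M)
    (n : ℕ) (hn : 1 ≤ n)
    (m : ℕ) (sVec : Fin (m + 1) → ℝ) (hs0 : sVec 0 = 0) (hsmono : StrictMono sVec)
    (hsT : sVec (Fin.last m) ≤ T) (xs : Fin m → E d) :
    ∀ s ∈ Set.Ioc (sVec (Fin.last m)) T, ∀ s' ∈ Set.Ioc (sVec (Fin.last m)) T,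
    ∀ x : E d,
      |reg T p u n s (pcPath sVec (Fin.snoc xs x))
          - reg T p u n s' (pcPath sVec (Fin.snoc xs x))| ≤
        (n : ℝ) * |s - s'| ^ (2 / (3 * p + 3)) := by
  intro s hs s' hs' x
  have jump_le_last : ∀ j, sVec j ≤ sVec (Fin.last m) := fun j =>
    hsmono.monotone (Fin.le_last j)
  have last_nonneg : 0 ≤ sVec (Fin.last m) := hs0.symm.trans_le (jump_le_last 0)
  have bddAbove_u : BddAbove (range u) := by
    obtain ⟨M, hM⟩ := hub
    exact ⟨M, forall_mem_range.2 fun θ => (abs_le.1 (hM θ)).2⟩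
  have path_const := fun r (hr : r ∈ Icc (sVec (Fin.last m)) T) =>
    pcPath_eq_of_forall_le (Fin.snoc xs x : Fin (m + 1) → E d) jump_le_last hr.1
  exact stmt8_general (by linarith) bddAbove_u n last_nonneg path_const hs hs'
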